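/- arXiv:2401.01320 — 2 statements merged into one kernel-verified Lean document; each statement's English description precedes it below -/
import Mathlib

section
/- For n ≥ 2, there is no uniform bound B such that every element of F_n is a product of at most B primitive elements. That is, for every natural number B there exists w ∈ F_n that cannot be written as a product of B or fewer primitive elements of F_n. Equivalently, the Cayley graph Cay(F_n, C^prim) has infinite diameter. -/
/-- A subgroup `F` of a group `G` is a proper free factor if there is a nontrivial
subgroup `K` such that `G` is the internal free product of `F` and `K`. -/
def IsProperFreeFactor {G : Type*} [Group G] (F : Subgroup G) : Prop :=
  ∃ K : Subgroup G, F ≠ ⊥ ∧ K ≠ ⊥ ∧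
    Function.Bijective (Monoid.Coprod.lift F.subtype K.subtype)

/-- An element of a group is separable if it lies in a proper free factor. -/
def IsSeparableElt {G : Type*} [Group G] (w : G) : Prop :=
  ∃ F : Subgroup G, IsProperFreeFactor F ∧ w ∈ F

/-- An element of the free group `F_n` is primitive if some automorphism carries
a standard generator to it, equivalently it belongs to some basis. -/
def IsPrimitiveElt {n : ℕ} (w : FreeGroup (Fin n)) : Prop :=
  ∃ (φ : FreeGroup (Fin n) ≃* FreeGroup (Fin n)) (i : Fin n), φ (FreeGroup.of i) = w

/-!
Let `v` be a positive word containing every two-letter positive word, and let `u` be a cyclically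
reduced word containing `v`. If `u` stabilizes an almost invariant set `A` of the free group, then
both ends of each translate of the axis of `u` in the Cayley tree lie on the same side of `A`.
Through every vertex these translates join enough directions that, as soon as `A` is almost
constant on each branch beyond the vertex, it is almost constant on their union. Working inwards
from a large ball, `A` is finite or cofinite.

A basis element does stabilize an `A` that is neither: the words starting with another basis
element. Hence neither `v` nor `v⁻¹` occurs in the cyclic reduction of a primitive element, and the
Brooks quasimorphism counting `v` is bounded on primitive elements. It is then bounded on products
of at most `B` of them, whereas it is unbounded on the powers of `v`.
-/

namespace PrimitiveWidth

open FreeGroup MulOpposite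
open scoped Pointwise

section Quasimorphism

variable {G R : Type*} [Group G] [CommRing R] [LinearOrder R]

/-- `f` is a quasimorphism on `G` whose defect is at most `D`. -/
def IsQuasimorphism (f : G → R) (D : R) : Prop :=
  ∀ g h, |f (g * h) - f g - f h| ≤ D

variable {f : G → R} {C D : R}

lemma IsQuasimorphism.abs_map_one_le (hf : IsQuasimorphism f D) : |f 1| ≤ D := by
  simpa using hf 1 1

variable [IsStrictOrderedRing R]

lemma IsQuasimorphism.abs_map_conj_sub_le (hf : IsQuasimorphism f D) (g h : G) :
    |f (g * h * g⁻¹) - f h| ≤ 4 * D := by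
  have h_conj := abs_le.1 (hf (g * h) g⁻¹)
  have h_mul := abs_le.1 (hf g h)
  have h_inv := abs_le.1 (hf g g⁻¹)
  have h_one := abs_le.1 hf.abs_map_one_le
  rw [mul_inv_cancel] at h_inv
  rw [abs_le]
  constructor <;> linarith

lemma IsQuasimorphism.abs_map_list_prod_le (hf : IsQuasimorphism f D) {l : List G}
    (hl : ∀ a ∈ l, |f a| ≤ C) : |f l.prod| ≤ l.length * (C + D) + D := by
  induction l with
  | nil => simpa using hf.abs_map_one_le
  | cons a l ih =>
    have h_tail := abs_le.1 (ih fun b hb => hl b (List.mem_cons_of_mem a hb))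
    have h_head := abs_le.1 (hl a List.mem_cons_self)
    have h_mul := abs_le.1 (hf a l.prod)
    rw [List.prod_cons, List.length_cons, Nat.cast_succ, add_one_mul, abs_le]
    constructor <;> linarith

end Quasimorphism

section InfixCount

variable {β : Type*} [DecidableEq β] {v : List β}

/-- The number of (possibly overlapping) occurrences of `v` as a contiguous subword of a word.
The empty suffix is not inspected, so that `infixCount [] L = L.length`. -/
def infixCount (v : List β) : List β → ℕ
  | [] => 0
  | a :: L => (if v <+: a :: L then 1 else 0) + infixCount v L

lemma infixCount_add_le_append (v L₁ L₂ : List β) :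
    infixCount v L₁ + infixCount v L₂ ≤ infixCount v (L₁ ++ L₂) := by
  induction L₁ with
  | nil => simp [infixCount]
  | cons a L ih =>
    have h_mono : v <+: a :: L → v <+: a :: (L ++ L₂) := fun h => h.trans ⟨L₂, rfl⟩
    simp only [infixCount, List.cons_append]
    split_ifs <;> first | omega | tauto

lemma infixCount_append_le_add_min (v L₁ L₂ : List β) :
    infixCount v (L₁ ++ L₂) ≤
      infixCount v L₁ + infixCount v L₂ + min L₁.length v.length := by
  induction L₁ with
  | nil => simp [infixCount]
  | cons a L ih =>
    have h_long : v.length ≤ L.length + 1 → v <+: a :: (L ++ L₂) → v <+: a :: L :=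
      fun hlen h => List.prefix_of_prefix_length_le h ⟨L₂, rfl⟩ hlen
    simp only [infixCount, List.cons_append, List.length_cons]
    split_ifs <;> first | omega | grind

lemma infixCount_append_le (v L₁ L₂ : List β) :
    infixCount v (L₁ ++ L₂) ≤ infixCount v L₁ + infixCount v L₂ + v.length :=
  (infixCount_append_le_add_min v L₁ L₂).trans (by gcongr; exact min_le_right _ _)

lemma infixCount_eq_zero {L : List β} (h : ¬ v <:+: L) : infixCount v L = 0 := by
  induction L with
  | nil => rfl
  | cons a L ih =>
    have h_prefix : ¬ v <+: a :: L := fun h' => h h'.isInfix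
    have h_tail : ¬ v <:+: L := fun h' => h (h'.trans (List.suffix_cons a L).isInfix)
    simp [infixCount, h_prefix, ih h_tail]

lemma infixCount_self_pos (hv : v ≠ []) : 0 < infixCount v v := by
  cases v with
  | nil => contradiction
  | cons a L => simp [infixCount]

lemma le_infixCount_flatten_replicate (hv : v ≠ []) (k : ℕ) :
    k ≤ infixCount v (List.replicate k v).flatten := by
  induction k with
  | zero => exact Nat.zero_le _
  | succ k ih =>
    rw [List.replicate_succ, List.flatten_cons]
    have h_append := infixCount_add_le_append v v (List.replicate k v).flatten
    have h_self := infixCount_self_pos hv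
    omega

end InfixCount

section ReducedWords

variable {α : Type*} {L M : List (α × Bool)} {x y : α × Bool}

lemma isReduced_append_cons_of_ne (hL : IsReduced (L ++ [x])) (hM : IsReduced (y :: M))
    (hxy : y ≠ (x.1, !x.2)) : IsReduced (L ++ [x] ++ y :: M) := by
  refine List.isChain_append.2 ⟨hL, hM, ?_⟩
  rintro p hp q hq hpq
  obtain rfl : x = p := by simpa using hp
  obtain rfl : y = q := by simpa using hq
  by_contra hne
  exact hxy (Prod.ext hpq.symm (Bool.eq_not.2 (Ne.symm hne)))

lemma isReduced_of_forall_snd_eq {s : Bool} (hL : ∀ x ∈ L, x.2 = s) : IsReduced L := by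
  refine List.isChain_iff_forall_rel_of_append_cons_cons.2 ?_
  rintro x y l₁ l₂ rfl -
  rw [hL x (by simp), hL y (by simp)]

lemma exists_forall_isReduced_concat [Nontrivial α] (hL : IsReduced L) :
    ∃ a : α, ∀ s, IsReduced (L ++ [(a, s)]) := by
  rcases List.eq_nil_or_concat' L with rfl | ⟨M, x, rfl⟩
  · obtain ⟨a⟩ : Nonempty α := inferInstance
    exact ⟨a, fun s => by simp⟩
  · obtain ⟨a, ha⟩ := exists_ne x.1
    exact ⟨a, fun s => isReduced_append_cons_of_ne hL .singleton fun h => ha (congrArg Prod.fst h)⟩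

lemma isInfix_invRev (h : L <:+: M) : invRev L <:+: invRev M := by
  obtain ⟨s, t, rfl⟩ := h
  exact ⟨invRev t, invRev s, by simp [invRev_append]⟩

lemma isReduced_invRev (hL : IsReduced L) : IsReduced (invRev L) := by
  classical
  rw [isReduced_iff_reduce_eq, reduce_invRev, hL.reduce_eq]

lemma isCyclicallyReduced_iff_isReduced_append_self :
    IsCyclicallyReduced L ↔ IsReduced (L ++ L) :=
  ⟨fun h => List.isChain_append.2 ⟨h.1, h.1, h.2⟩,
    fun h => ⟨(List.isChain_append.1 h).1, (List.isChain_append.1 h).2.2⟩⟩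

lemma isCyclicallyReduced_invRev (hL : IsCyclicallyReduced L) :
    IsCyclicallyReduced (invRev L) := by
  rw [isCyclicallyReduced_iff_isReduced_append_self] at hL ⊢
  rw [← invRev_append]
  exact isReduced_invRev hL

lemma exists_isReduced_append_of_isReduced (hL : IsReduced L) (hM : IsReduced M) :
    ∃ a b c, L = a ++ b ∧ M = invRev b ++ c ∧ IsReduced (a ++ c) := by
  induction L using List.reverseRecOn generalizing M with
  | nil => exact ⟨[], [], M, rfl, rfl, hM⟩
  | append_singleton L x ih =>
    cases M with
    | nil => exact ⟨L ++ [x], [], [], by simp, rfl, by simpa using hL⟩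
    | cons y M =>
      by_cases hxy : y = (x.1, !x.2)
      · obtain ⟨a, b, c, rfl, rfl, hac⟩ :=
          ih (M := M) (hL.infix ⟨[], [x], rfl⟩) (hM.infix ⟨[y], [], by simp⟩)
        exact ⟨a, b ++ [x], c, by simp, by simp [hxy, invRev], hac⟩
      · exact ⟨L ++ [x], [], y :: M, by simp, rfl, isReduced_append_cons_of_ne hL hM hxy⟩

lemma exists_eq_conj_mk_isCyclicallyReduced (p : FreeGroup α) :
    ∃ (g : FreeGroup α) (u : List (α × Bool)), IsCyclicallyReduced u ∧ p = g * mk u * g⁻¹ := by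
  classical
  refine ⟨mk (reduceCyclically.conjugator p.toWord), reduceCyclically p.toWord,
    reduceCyclically.isCyclicallyReduced isReduced_toWord, ?_⟩
  rw [inv_mk, mul_mk, mul_mk, reduceCyclically.conj_conjugator_reduceCyclically, mk_toWord]

variable [DecidableEq α]

lemma toWord_mk_of_isReduced (hL : IsReduced L) : (mk L).toWord = L := by
  rw [toWord_mk, hL.reduce_eq]

lemma exists_toWord_mul (g h : FreeGroup α) :
    ∃ a b c, g.toWord = a ++ b ∧ h.toWord = invRev b ++ c ∧ (g * h).toWord = a ++ c := by
  obtain ⟨a, b, c, hg, hh, hac⟩ :=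
    exists_isReduced_append_of_isReduced (isReduced_toWord (x := g)) (isReduced_toWord (x := h))
  refine ⟨a, b, c, hg, hh, ?_⟩
  have h_mul : g * h = mk (a ++ c) := by
    rw [← mk_toWord (x := g), ← mk_toWord (x := h), hg, hh]
    simp only [← mul_mk, ← inv_mk]
    group
  rw [h_mul, toWord_mk_of_isReduced hac]

end ReducedWords

section Brooks

variable {α : Type*} [DecidableEq α] {v : List (α × Bool)}

/-- The Brooks counting function of `v`: the number of occurrences of `v` in a reduced word minus
that of `v⁻¹`. Occurrences of `v⁻¹` in `g` are counted as occurrences of `v` in `g⁻¹`. -/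
def brooks (v : List (α × Bool)) (g : FreeGroup α) : ℤ :=
  infixCount v g.toWord - infixCount v g⁻¹.toWord

-- With `g = ab`, `h = b⁻¹c` and `gh = ac` reduced, the contributions of `b` to `g` and `h` cancel.
lemma isQuasimorphism_brooks (v : List (α × Bool)) :
    IsQuasimorphism (brooks v) (3 * v.length) := by
  intro g h
  obtain ⟨a, b, c, hg, hh, hgh⟩ := exists_toWord_mul g h
  simp only [brooks, toWord_inv, hg, hh, hgh, invRev_append, invRev_invRev]
  have lower := infixCount_add_le_append v
  have upper := infixCount_append_le v
  have := lower a b; have := lower (invRev b) (invRev a)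
  have := upper a b; have := upper (invRev b) (invRev a)
  have := lower (invRev b) c; have := lower (invRev c) b
  have := upper (invRev b) c; have := upper (invRev c) b
  have := lower a c; have := lower (invRev c) (invRev a)
  have := upper a c; have := upper (invRev c) (invRev a)
  rw [abs_le]
  omega

lemma brooks_mk_eq_zero {u : List (α × Bool)} (hu : IsReduced u) (h : ¬ v <:+: u)
    (h_inv : ¬ v <:+: invRev u) : brooks v (mk u) = 0 := by
  rw [brooks, toWord_inv, toWord_mk_of_isReduced hu, infixCount_eq_zero h,
    infixCount_eq_zero h_inv, sub_self]

lemma le_brooks_mk_pow (hv : v ≠ []) (hpos : ∀ x ∈ v, x.2 = true) (k : ℕ) :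
    (k : ℤ) ≤ brooks v (mk v ^ k) := by
  set W := (List.replicate k v).flatten with hW
  have hWpos : ∀ x ∈ W, x.2 = true := fun x hx => by
    obtain ⟨l, hl, hxl⟩ := List.mem_flatten.1 hx
    exact hpos x (List.eq_of_mem_replicate hl ▸ hxl)
  have h_not_occurs : ¬ v <:+: invRev W := fun h => by
    obtain ⟨x, hx⟩ := List.exists_mem_of_ne_nil v hv
    obtain ⟨y, hy, rfl⟩ : ∃ y ∈ W, (y.1, !y.2) = x := by simpa [invRev] using h.subset hx
    simpa [hWpos y hy] using hpos _ hx
  rw [pow_mk, ← hW, brooks, toWord_inv, toWord_mk_of_isReduced (isReduced_of_forall_snd_eq hWpos),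
    infixCount_eq_zero h_not_occurs, Nat.cast_zero, sub_zero]
  exact_mod_cast le_infixCount_flatten_replicate hv k

end Brooks

section AlmostInvariant

variable {G : Type*} [Group G] {p : G}

/-- A set is almost invariant if every right translation changes it in only finitely many
elements. For finitely generated `G` such a set, up to finite sets, is a clopen set of ends. -/
def IsAlmostInvariant (A : Set G) : Prop :=
  ∀ x, {g | ¬(g * x ∈ A ↔ g ∈ A)}.Finite

/-- `p` stabilizes, under right translation, an almost invariant set which is neither finite nor
cofinite; a property of primitive elements of free groups of finite rank at least two. -/
def StabilizesAlmostInvariantSet (p : G) : Prop :=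
  ∃ A : Set G, A.Infinite ∧ Aᶜ.Infinite ∧ IsAlmostInvariant A ∧
    op p ∈ MulAction.stabilizer Gᵐᵒᵖ A

lemma StabilizesAlmostInvariantSet.inv (hp : StabilizesAlmostInvariantSet p) :
    StabilizesAlmostInvariantSet p⁻¹ := by
  obtain ⟨A, hA, hAc, hAinv, hpA⟩ := hp
  exact ⟨A, hA, hAc, hAinv, inv_mem hpA⟩

lemma StabilizesAlmostInvariantSet.map {H : Type*} [Group H]
    (hp : StabilizesAlmostInvariantSet p) (φ : G ≃* H) :
    StabilizesAlmostInvariantSet (φ p) := by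
  obtain ⟨A, hA, hAc, hAinv, hpA⟩ := hp
  have h_range : ∀ B : Set G, B ⊆ Set.range φ.symm := by simp [φ.symm.surjective.range_eq]
  refine ⟨φ.symm ⁻¹' A, hA.preimage (h_range A), hAc.preimage (h_range Aᶜ), fun x => ?_, ?_⟩
  · convert (hAinv (φ.symm x)).preimage φ.symm.injective.injOn using 1
    ext g
    simp
  · rw [MulAction.mem_stabilizer_set] at hpA ⊢
    exact fun g => by simpa using hpA (φ.symm g)

end AlmostInvariant

section Cone

variable {α : Type*} [DecidableEq α] {L : List (α × Bool)} {A : Set (FreeGroup α)}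

/-- The elements whose reduced word starts with `L`. -/
def cone (L : List (α × Bool)) : Set (FreeGroup α) := {g | L <+: g.toWord}

lemma cone_nil : cone ([] : List (α × Bool)) = Set.univ :=
  Set.eq_univ_of_forall fun _ => List.nil_prefix

lemma cone_eq_empty (hL : ¬ IsReduced L) : cone L = ∅ :=
  Set.eq_empty_of_forall_notMem fun _ hg => hL (isReduced_toWord.infix hg.isInfix)

lemma cone_subset_insert_iUnion (L : List (α × Bool)) :
    cone L ⊆ insert (mk L) (⋃ x, cone (L ++ [x])) := by
  rintro g ⟨t, ht⟩
  cases t with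
  | nil => exact Or.inl (by rw [← mk_toWord (x := g), ← ht, List.append_nil])
  | cons x t => exact Or.inr (Set.mem_iUnion.2 ⟨x, t, by simpa using ht⟩)

lemma finite_cone_inter_of_forall_concat [Finite α]
    (h : ∀ x, (cone (L ++ [x]) ∩ A).Finite) : (cone L ∩ A).Finite := by
  refine ((Set.finite_iUnion h).insert (mk L)).subset ?_
  rintro g ⟨hgL, hgA⟩
  rcases cone_subset_insert_iUnion L hgL with hg | hg
  · exact Or.inl hg
  · obtain ⟨x, hx⟩ := Set.mem_iUnion.1 hg
    exact Or.inr (Set.mem_iUnion.2 ⟨x, hx, hgA⟩)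

lemma mul_mem_cone_iff {g x : FreeGroup α} (h : L.length + x.norm ≤ g.norm) :
    g * x ∈ cone L ↔ g ∈ cone L := by
  obtain ⟨a, b, c, hg, hx, hgx⟩ := exists_toWord_mul g x
  have hLa : L.length ≤ a.length := by
    simp only [FreeGroup.norm, hg, hx, List.length_append, invRev_length] at h
    omega
  have h_prefix (t) : L <+: a ++ t ↔ L <+: a :=
    ⟨fun ht => List.prefix_of_prefix_length_le ht ⟨t, rfl⟩ hLa, List.prefix_append_of_prefix⟩
  simp only [cone, Set.mem_ofPred_eq, hg, hgx, h_prefix]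

lemma finite_norm_lt [Finite α] (R : ℕ) : {g : FreeGroup α | g.norm < R}.Finite :=
  (List.finite_length_lt (α × Bool) R).preimage toWord_injective.injOn

lemma isAlmostInvariant_cone [Finite α] (L : List (α × Bool)) : IsAlmostInvariant (cone L) :=
  fun x => (finite_norm_lt (L.length + x.norm)).subset fun _ hg =>
    not_le.1 fun h => hg (mul_mem_cone_iff h)

lemma mul_of_mem_cone_iff {i j : α} (hij : i ≠ j) (s : Bool) (g : FreeGroup α) :
    g * of i ∈ cone [(j, s)] ↔ g ∈ cone [(j, s)] := by
  obtain ⟨a, b, c, hg, hi, hgi⟩ := exists_toWord_mul g (of i)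
  rw [toWord_of] at hi
  have h_not_prefix (t : List (α × Bool)) (ht : ∀ y ∈ t, y.1 = i) : ¬ [(j, s)] <+: t :=
    fun h => hij (ht _ (h.subset List.mem_cons_self)).symm
  have hb : ¬ [(j, s)] <+: b := h_not_prefix b fun y hy => by
    have h_inv : (y.1, !y.2) ∈ [(i, true)] :=
      hi ▸ List.mem_append_left c (by simpa [invRev] using hy)
    exact congrArg Prod.fst (List.mem_singleton.1 h_inv)
  have hc : ¬ [(j, s)] <+: c := h_not_prefix c fun y hy =>
    congrArg Prod.fst (List.mem_singleton.1 (hi ▸ List.mem_append_right _ hy))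
  simp only [cone, Set.mem_ofPred_eq, hg, hgi]
  cases a with
  | nil => simp only [List.nil_append, hb, hc]
  | cons y a => simp

lemma IsAlmostInvariant.exists_forall_mul_mem_iff [Finite α] (hA : IsAlmostInvariant A) :
    ∃ R, ∀ g : FreeGroup α, R ≤ g.norm → ∀ x, g * mk [x] ∈ A ↔ g ∈ A := by
  have h_finite : (⋃ x, {g | ¬(g * mk [x] ∈ A ↔ g ∈ A)}).Finite :=
    Set.finite_iUnion fun x => hA (mk [x])
  obtain ⟨R, hR⟩ := (h_finite.image FreeGroup.norm).bddAbove
  refine ⟨R + 1, fun g hg x => ?_⟩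
  by_contra hgx
  have : g.norm ≤ R := hR ⟨g, Set.mem_iUnion.2 ⟨x, hgx⟩, rfl⟩
  omega

lemma mem_iff_mk_mem_of_mem_cone {R : ℕ}
    (hR : ∀ g : FreeGroup α, R ≤ g.norm → ∀ x, g * mk [x] ∈ A ↔ g ∈ A) (hL : R ≤ L.length)
    {g : FreeGroup α} (hg : g ∈ cone L) : g ∈ A ↔ mk L ∈ A := by
  obtain ⟨t, ht⟩ := hg
  have h_extend : ∀ t, IsReduced (L ++ t) → (mk (L ++ t) ∈ A ↔ mk L ∈ A) := by
    intro t
    induction t using List.reverseRecOn with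
    | nil => simp
    | append_singleton t x ih =>
      intro htx
      have ht : IsReduced (L ++ t) := htx.infix ⟨[], [x], by simp⟩
      rw [← ih ht, ← List.append_assoc, ← mul_mk]
      refine hR _ ?_ x
      rw [FreeGroup.norm, toWord_mk_of_isReduced ht, List.length_append]
      omega
  rw [← h_extend t (ht ▸ isReduced_toWord), ht, mk_toWord]

/-- `A` contains almost all or almost none of the elements of `cone L`; that is, `A` does not
separate the ends of the free group lying in `cone L`. -/
def IsAlmostConstantOnCone (A : Set (FreeGroup α)) (L : List (α × Bool)) : Prop :=
  (cone L ∩ A).Finite ∨ (cone L ∩ Aᶜ).Finite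

lemma IsAlmostInvariant.exists_forall_isAlmostConstantOnCone [Finite α]
    (hA : IsAlmostInvariant A) : ∃ R, ∀ L, L.length = R → IsAlmostConstantOnCone A L := by
  obtain ⟨R, hR⟩ := hA.exists_forall_mul_mem_iff
  refine ⟨R, fun L hL => ?_⟩
  have h_mem {g} (hg : g ∈ cone L) := mem_iff_mk_mem_of_mem_cone hR hL.ge hg
  by_cases h : mk L ∈ A
  · exact Or.inr (Set.finite_empty.subset fun g hg => hg.2 ((h_mem hg.1).2 h))
  · exact Or.inl (Set.finite_empty.subset fun g hg => h ((h_mem hg.1).1 hg.2))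

end Cone

section Whitehead

variable {α : Type*} [DecidableEq α] {A : Set (FreeGroup α)} {L u : List (α × Bool)}

-- The elements `L x b uᵏ` all lie in `A` and in the cone, as no cancellation occurs.
lemma infinite_cone_inter {a b : List (α × Bool)} {x : α × Bool}
    (hu : IsCyclicallyReduced (a ++ x :: b))
    (hA : op (mk (a ++ x :: b)) ∈ MulAction.stabilizer (FreeGroup α)ᵐᵒᵖ A)
    (hL : IsReduced (L ++ [x])) (hmem : mk (L ++ x :: b) ∈ A) :
    (cone (L ++ [x]) ∩ A).Infinite := by
  set u := a ++ x :: b with hu_def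
  have h_toWord (k : ℕ) : (mk (L ++ x :: b) * mk u ^ k).toWord =
      L ++ [x] ++ (b ++ (List.replicate k u).flatten) := by
    have h_reduced : IsReduced (L ++ [x] ++ (b ++ (List.replicate k u).flatten)) := by
      refine IsReduced.append_overlap hL ?_ (by simp)
      refine (hu.flatten_replicate (k + 1)).isReduced.infix ⟨a, [], ?_⟩
      simp [List.replicate_succ, hu_def]
    rw [← toWord_mk_of_isReduced h_reduced, pow_mk, mul_mk]
    simp
  refine Set.infinite_of_injective_forall_mem (f := fun k : ℕ => mk (L ++ x :: b) * mk u ^ k)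
    (fun k l hkl => ?_) fun k => ⟨?_, ?_⟩
  · have h_length := congrArg (fun g => g.toWord.length) hkl
    simp only [h_toWord] at h_length
    simpa [hu_def] using h_length
  · exact ⟨_, (h_toWord k).symm⟩
  · have h_pow := pow_mem hA k
    rw [← op_pow, MulAction.mem_stabilizer_set] at h_pow
    exact (h_pow _).2 hmem

-- Some translate of the axis of `u` passes through the vertex `L` of the Cayley tree, entering
-- along `x` and leaving along `y`; its two ends lie in these two cones and on the same side of `A`.
lemma infinite_cone_inter_compl_of_finite {x y : α × Bool} (hu : IsCyclicallyReduced u)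
    (hA : op (mk u) ∈ MulAction.stabilizer (FreeGroup α)ᵐᵒᵖ A) (hxy : [x, y] <:+: u)
    (hy : IsReduced (L ++ [y])) (hx : IsReduced (L ++ [(x.1, !x.2)]))
    (hfin : (cone (L ++ [y]) ∩ A).Finite) :
    (cone (L ++ [(x.1, !x.2)]) ∩ Aᶜ).Infinite := by
  obtain ⟨a, b, hab⟩ := hxy
  have hu_eq : u = (a ++ [x]) ++ y :: b := by simp [← hab]
  have hu_inv : invRev u = (invRev b ++ [(y.1, !y.2)]) ++ (x.1, !x.2) :: invRev a := by
    simp [← hab, invRev]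
  have h_notMem : mk (L ++ y :: b) ∉ A := fun h =>
    infinite_cone_inter (hu_eq ▸ hu) (hu_eq ▸ hA) hy h hfin
  have h_translate : mk (L ++ (x.1, !x.2) :: invRev a) * mk u = mk (L ++ y :: b) := by
    have : mk ((x.1, !x.2) :: invRev a) = (mk (a ++ [x]))⁻¹ := by simp [inv_mk, invRev]
    rw [hu_eq, ← mul_mk, ← mul_mk, ← mul_mk (L₂ := y :: b), this]
    group
  have hA_inv : op (mk (invRev u)) ∈ MulAction.stabilizer (FreeGroup α)ᵐᵒᵖ Aᶜ := by
    rw [stabilizer_compl, ← inv_mk, op_inv]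
    exact inv_mem hA
  refine infinite_cone_inter (hu_inv ▸ isCyclicallyReduced_invRev hu) (hu_inv ▸ hA_inv) hx ?_
  rw [← h_translate] at h_notMem
  exact fun h => h_notMem ((MulAction.mem_stabilizer_set.1 hA _).2 h)

lemma finite_cone_inter_of_opposite_sign (hu : IsCyclicallyReduced u)
    (hA : op (mk u) ∈ MulAction.stabilizer (FreeGroup α)ᵐᵒᵖ A)
    (huniv : ∀ i j : α, [(i, true), (j, true)] <:+: u)
    (hconst : ∀ x, IsAlmostConstantOnCone A (L ++ [x])) {i : α} {s : Bool}
    (hi : IsReduced (L ++ [(i, s)])) (hfin : (cone (L ++ [(i, s)]) ∩ A).Finite) (j : α) :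
    (cone (L ++ [(j, !s)]) ∩ A).Finite := by
  by_cases hj : IsReduced (L ++ [(j, !s)])
  · refine (hconst _).resolve_right ?_
    cases s with
    | true => exact infinite_cone_inter_compl_of_finite hu hA (huniv j i) hi hj hfin
    | false =>
      have hA_inv : op (mk (invRev u)) ∈ MulAction.stabilizer (FreeGroup α)ᵐᵒᵖ A := by
        rw [← inv_mk, op_inv]
        exact inv_mem hA
      exact infinite_cone_inter_compl_of_finite (isCyclicallyReduced_invRev hu) hA_inv
        (isInfix_invRev (huniv i j)) hi hj hfin
  · simp [cone_eq_empty hj]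

lemma forall_finite_cone_inter (hu : IsCyclicallyReduced u)
    (hA : op (mk u) ∈ MulAction.stabilizer (FreeGroup α)ᵐᵒᵖ A)
    (huniv : ∀ i j : α, [(i, true), (j, true)] <:+: u)
    (hconst : ∀ x, IsAlmostConstantOnCone A (L ++ [x])) {i : α}
    (hi : ∀ s, IsReduced (L ++ [(i, s)])) (hfin : (cone (L ++ [(i, true)]) ∩ A).Finite) :
    ∀ x, (cone (L ++ [x]) ∩ A).Finite := by
  have h_opposite {s : Bool} := finite_cone_inter_of_opposite_sign hu hA huniv hconst (hi s)
  rintro ⟨j, s⟩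
  cases s with
  | false => exact h_opposite hfin j
  | true => exact h_opposite (h_opposite hfin i) j

lemma isAlmostConstantOnCone_of_forall_concat [Finite α] [Nontrivial α]
    (hu : IsCyclicallyReduced u) (hA : op (mk u) ∈ MulAction.stabilizer (FreeGroup α)ᵐᵒᵖ A)
    (huniv : ∀ i j : α, [(i, true), (j, true)] <:+: u)
    (hconst : ∀ x, IsAlmostConstantOnCone A (L ++ [x])) : IsAlmostConstantOnCone A L := by
  by_cases hL : IsReduced L
  · obtain ⟨i, hi⟩ := exists_forall_isReduced_concat hL
    have hconst_compl : ∀ x, IsAlmostConstantOnCone Aᶜ (L ++ [x]) := fun x => by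
      simpa only [IsAlmostConstantOnCone, compl_compl] using (hconst x).symm
    have hA_compl : op (mk u) ∈ MulAction.stabilizer (FreeGroup α)ᵐᵒᵖ Aᶜ := by
      rwa [stabilizer_compl]
    exact (hconst (i, true)).imp
      (fun h => finite_cone_inter_of_forall_concat
        (forall_finite_cone_inter hu hA huniv hconst hi h))
      (fun h => finite_cone_inter_of_forall_concat
        (forall_finite_cone_inter hu hA_compl huniv hconst_compl hi h))
  · exact Or.inl (by simp [cone_eq_empty hL])

omit [DecidableEq α] in
theorem not_stabilizesAlmostInvariantSet_mk [Finite α] [Nontrivial α]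
    (hu : IsCyclicallyReduced u) (huniv : ∀ i j : α, [(i, true), (j, true)] <:+: u) :
    ¬ StabilizesAlmostInvariantSet (mk u) := by
  classical
  rintro ⟨A, hA, hAc, hAinv, huA⟩
  obtain ⟨R, hR⟩ := hAinv.exists_forall_isAlmostConstantOnCone
  have h_root : IsAlmostConstantOnCone A [] := by
    induction R with
    | zero => exact hR [] rfl
    | succ R ih =>
      exact ih fun L hL => isAlmostConstantOnCone_of_forall_concat hu huA huniv
        fun x => hR (L ++ [x]) (by simp [hL])
  rw [IsAlmostConstantOnCone, cone_nil, Set.univ_inter, Set.univ_inter] at h_root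
  exact h_root.elim hA hAc

end Whitehead

section Width

variable {α : Type*}

lemma stabilizesAlmostInvariantSet_of [Finite α] [Nontrivial α] (i : α) :
    StabilizesAlmostInvariantSet (of i : FreeGroup α) := by
  classical
  obtain ⟨j, hji⟩ := exists_ne i
  have h_injective (a : α) : Function.Injective fun k : ℕ => of a ^ (k + 1) := fun k l hkl => by
    simpa using congrArg FreeGroup.norm hkl
  refine ⟨cone [(j, true)], ?_, ?_, isAlmostInvariant_cone _,
    MulAction.mem_stabilizer_set.2 (mul_of_mem_cone_iff hji.symm true)⟩
  · refine Set.infinite_of_injective_forall_mem (h_injective j) fun k => ?_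
    simp [cone, List.replicate_succ]
  · refine Set.infinite_of_injective_forall_mem (h_injective i) fun k => ?_
    simp [cone, List.replicate_succ, hji]

lemma exists_positive_word_forall_pair_isInfix (α : Type*) [Finite α] :
    ∃ v : List (α × Bool), (∀ x ∈ v, x.2 = true) ∧
      ∀ i j : α, [(i, true), (j, true)] <:+: v := by
  cases nonempty_fintype α
  let positivePairs := (Finset.univ : Finset (α × α)).toList.map fun q => [(q.1, true), (q.2, true)]
  refine ⟨positivePairs.flatten, by simp [positivePairs], fun i j => ?_⟩
  exact List.infix_of_mem_flatten (List.mem_map.2 ⟨(i, j), by simp, rfl⟩)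

lemma StabilizesAlmostInvariantSet.abs_brooks_le [DecidableEq α] [Finite α] [Nontrivial α]
    {v : List (α × Bool)} (hv : ∀ i j : α, [(i, true), (j, true)] <:+: v) {p : FreeGroup α}
    (hp : StabilizesAlmostInvariantSet p) : |brooks v p| ≤ 4 * (3 * v.length) := by
  obtain ⟨g, u, hu, rfl⟩ := exists_eq_conj_mk_isCyclicallyReduced p
  have hu_stab : StabilizesAlmostInvariantSet (mk u) := by
    simpa [mul_assoc] using hp.map (MulAut.conj g⁻¹)
  have hu_inv_stab : StabilizesAlmostInvariantSet (mk (invRev u)) := inv_mk ▸ hu_stab.inv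
  have h_zero : brooks v (mk u) = 0 := brooks_mk_eq_zero hu.isReduced
    (fun h => not_stabilizesAlmostInvariantSet_mk hu (fun i j => (hv i j).trans h) hu_stab)
    (fun h => not_stabilizesAlmostInvariantSet_mk (isCyclicallyReduced_invRev hu)
      (fun i j => (hv i j).trans h) hu_inv_stab)
  simpa [h_zero] using (isQuasimorphism_brooks v).abs_map_conj_sub_le g (mk u)

end Width

end PrimitiveWidth

open PrimitiveWidth

lemma IsPrimitiveElt.stabilizesAlmostInvariantSet {n : ℕ} (hn : 2 ≤ n) {p : FreeGroup (Fin n)}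
    (hp : IsPrimitiveElt p) : StabilizesAlmostInvariantSet p := by
  obtain ⟨φ, i, rfl⟩ := hp
  have : Nontrivial (Fin n) := Fin.nontrivial_iff_two_le.2 hn
  exact (stabilizesAlmostInvariantSet_of i).map φ

theorem no_uniform_primitive_bound_general {α : Type*} [Finite α] [Nontrivial α] (B : ℕ) :
    ∃ w : FreeGroup α,
      ¬∃ l : List (FreeGroup α),
        l.length ≤ B ∧ (∀ a ∈ l, StabilizesAlmostInvariantSet a) ∧ l.prod = w := by
  classical
  obtain ⟨v, hpos, huniv⟩ := exists_positive_word_forall_pair_isInfix α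
  have hv : v ≠ [] := by
    obtain ⟨i⟩ : Nonempty α := inferInstance
    exact List.ne_nil_of_mem ((huniv i i).subset List.mem_cons_self)
  let D : ℤ := 3 * v.length
  have : 0 ≤ D := by positivity
  let N : ℤ := B * (4 * D + D) + D
  refine ⟨FreeGroup.mk v ^ (N + 1).toNat, ?_⟩
  rintro ⟨l, hlB, hl, hprod⟩
  have h_upper : |brooks v l.prod| ≤ N := calc
    |brooks v l.prod| ≤ l.length * (4 * D + D) + D :=
      (isQuasimorphism_brooks v).abs_map_list_prod_le fun a ha => (hl a ha).abs_brooks_le huniv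
    _ ≤ B * (4 * D + D) + D := by gcongr
  have h_lower : N + 1 ≤ brooks v l.prod :=
    hprod ▸ (Int.self_le_toNat _).trans (le_brooks_mk_pow hv hpos _)
  linarith [le_abs_self (brooks v l.prod)]

/-- For `n ≥ 2`, there is no uniform bound on the number of primitive factors
needed to express elements of `F_n`. -/
theorem no_uniform_primitive_bound (n : ℕ) (hn : 2 ≤ n) (B : ℕ) :
    ∃ w : FreeGroup (Fin n),
      ¬∃ l : List (FreeGroup (Fin n)),
        l.length ≤ B ∧ (∀ a ∈ l, IsPrimitiveElt a) ∧ l.prod = w := by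
  have : Nontrivial (Fin n) := Fin.nontrivial_iff_two_le.2 hn
  obtain ⟨w, hw⟩ := no_uniform_primitive_bound_general (α := Fin n) B
  exact ⟨w, fun ⟨l, hlB, hl, hprod⟩ =>
    hw ⟨l, hlB, fun a ha => (hl a ha).stabilizesAlmostInvariantSet hn, hprod⟩⟩
end

section
/- For n ≥ 2, there is no uniform bound B such that every element of F_n is a product of at most B separable elements; equivalently, the word metric on F_n with respect to the set of nontrivial separable elements is unbounded. -/
/-!
A proper free factor `F` of a torsion-free group `G = F ∗ K` yields a cut of the Cayley graph of
`G` into two infinite sides, with finitely many edges across for each generator, which is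
invariant under `F`. Now let `W` be a cyclically reduced word which contains `x_i x_j` for all
generators `x_i`, `x_j`. A cut of the Cayley tree of `F_n` has an extremal vertex each of whose
outward branches lies, up to finitely many points, on one side, but not all of them on the same
side. If the cut is invariant under `W`, then each occurrence of a two-letter block in `W` puts
the two branches joined by it on the same side, and these blocks connect all branches (Whitehead's
cut vertex argument), which is absurd. Hence a fixed positive word `u` containing all the blocks
`x_i x_j` does not occur in the cyclically reduced conjugate of a separable element, so Brooks'
counting quasimorphism of `u` is bounded on separable elements, and grows at most linearly in the
number of separable factors. But it tends to infinity along the powers of `u`.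
-/

open Filter

section FreeFactor

variable {G : Type*} [Group G]

/-- The set `A` cuts the Cayley graph of `G` (edges `v — s * v`) into two infinite sides with
only finitely many edges across for each `s`, and it is exactly invariant under `g`. Such a cut
separates ends of `G`, but not the two ends of any orbit `k ↦ g ^ k * v`. -/
structure IsEndCut (g : G) (A : Set G) : Prop where
  eventually_mul_mem_iff : ∀ s, ∀ᶠ v in cofinite, (s * v ∈ A ↔ v ∈ A)
  infinite : A.Infinite
  infinite_compl : Aᶜ.Infinite
  mul_mem_iff : ∀ v, g * v ∈ A ↔ v ∈ A

namespace IsEndCut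

variable {g : G} {A : Set G}

theorem compl (h : IsEndCut g A) : IsEndCut g Aᶜ where
  eventually_mul_mem_iff s := (h.eventually_mul_mem_iff s).mono fun _ hv ↦ not_congr hv
  infinite := h.infinite_compl
  infinite_compl := by simpa using h.infinite
  mul_mem_iff v := not_congr (h.mul_mem_iff v)

theorem inv (h : IsEndCut g A) : IsEndCut g⁻¹ A where
  __ := h
  mul_mem_iff v := by simpa using (h.mul_mem_iff (g⁻¹ * v)).symm

theorem pow_mul_mem_iff (h : IsEndCut g A) (k : ℕ) (v : G) : g ^ k * v ∈ A ↔ v ∈ A := by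
  induction k with
  | zero => simp
  | succ k ih => rw [pow_succ', mul_assoc, h.mul_mem_iff, ih]

theorem conj (h : IsEndCut g A) (p : G) : IsEndCut (p⁻¹ * g * p) ((p * ·) ⁻¹' A) where
  eventually_mul_mem_iff s := by
    have := (mul_right_injective p).tendsto_cofinite.eventually
      (h.eventually_mul_mem_iff (p * s * p⁻¹))
    simpa [mul_assoc] using this
  infinite := h.infinite.preimage (by simp [(Group.mulLeft_bijective p).surjective.range_eq])
  infinite_compl :=
    h.infinite_compl.preimage (by simp [(Group.mulLeft_bijective p).surjective.range_eq])
  mul_mem_iff v := by simpa [mul_assoc] using h.mul_mem_iff (p * v)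

end IsEndCut

theorem coe_infinite_of_ne_bot [IsMulTorsionFree G] {H : Subgroup G} (hH : H ≠ ⊥) :
    (H : Set G).Infinite := by
  obtain ⟨x, hx, hx1⟩ := H.bot_or_exists_ne_one.resolve_left hH
  exact Set.infinite_of_injective_forall_mem (IsMulTorsionFree.pow_right_injective hx1)
    fun n ↦ H.pow_mem hx n

theorem exists_hom_extending {F K : Subgroup G}
    (hFK : Function.Bijective (Monoid.Coprod.lift F.subtype K.subtype)) {H : Type*} [Group H]
    (φ : F →* H) (χ : K →* H) : ∃ r : G →* H, (∀ f : F, r f = φ f) ∧ ∀ k : K, r k = χ k := by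
  let e := MulEquiv.ofBijective _ hFK
  have hinl (f : F) : e.symm f = .inl f := by simp [MulEquiv.symm_apply_eq, e]
  have hinr (k : K) : e.symm k = .inr k := by simp [MulEquiv.symm_apply_eq, e]
  exact ⟨(Monoid.Coprod.lift φ χ).comp e.symm, fun f ↦ by simp [hinl], fun k ↦ by simp [hinr]⟩

theorem eventually_swap_apply_eq {X : Type*} [DecidableEq X] (a b : X) :
    ∀ᶠ x in cofinite, Equiv.swap a b x = x := by
  filter_upwards [(Set.toFinite {a, b}).compl_mem_cofinite] with x hx
  simp only [Set.mem_compl_iff, Set.mem_insert_iff, Set.mem_singleton_iff, not_or] at hx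
  exact Equiv.swap_apply_of_ne_of_ne hx.1 hx.2

theorem eventually_apply_eq_smul_of_bijective_lift {X : Type*} [MulAction G X] {F K : Subgroup G}
    (hFK : Function.Bijective (Monoid.Coprod.lift F.subtype K.subtype)) {r : G →* Equiv.Perm X}
    (hF : ∀ f ∈ F, ∀ᶠ x in cofinite, r f x = f • x)
    (hK : ∀ k ∈ K, ∀ᶠ x in cofinite, r k x = k • x) (s : G) :
    ∀ᶠ x in cofinite, r s x = s • x := by
  obtain ⟨w, rfl⟩ := hFK.surjective s
  induction w using Monoid.Coprod.induction_on with
  | inl f => simpa using hF f f.2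
  | inr k => simpa using hK k k.2
  | mul u v hu hv =>
    rw [map_mul]
    filter_upwards [hv, (MulAction.injective (Monoid.Coprod.lift F.subtype K.subtype v)
      ).tendsto_cofinite.eventually hu] with x hx hx'
    rw [map_mul, Equiv.Perm.mul_apply, hx, hx', mul_smul]

/-- Two copies of `G`, with `F` acting by translation and `K` acting by translation after the two
copies of `1` have been interchanged. -/
theorem exists_twisted_translation {F K : Subgroup G}
    (hFK : Function.Bijective (Monoid.Coprod.lift F.subtype K.subtype)) :
    ∃ r : G →* Equiv.Perm (G ⊕ G),
      (∀ s, ∀ᶠ x in cofinite, r s x = s • x) ∧ (∀ f ∈ F, ∀ x, r f x = f • x) ∧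
        ∀ k ∈ K, k ≠ 1 → r k (.inl 1) = .inr k := by
  classical
  let σ : Equiv.Perm (G ⊕ G) := Equiv.swap (.inl 1) (.inr 1)
  let τ := MulAction.toPermHom G (G ⊕ G)
  obtain ⟨r, hrF, hrK⟩ := exists_hom_extending hFK (τ.comp F.subtype)
    (((MulAut.conj σ).toMonoidHom.comp τ).comp K.subtype)
  have hF : ∀ f ∈ F, ∀ x, r f x = f • x := fun f hf x ↦ DFunLike.congr_fun (hrF ⟨f, hf⟩) x
  have hK : ∀ k ∈ K, ∀ x, r k x = σ (k • σ x) := fun k hk x ↦ DFunLike.congr_fun (hrK ⟨k, hk⟩) x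
  refine ⟨r, eventually_apply_eq_smul_of_bijective_lift hFK
    (fun f hf ↦ .of_forall (hF f hf)) fun k hk ↦ ?_, hF, fun k hk hk1 ↦ ?_⟩
  · filter_upwards [eventually_swap_apply_eq (.inl 1) (.inr 1),
      (MulAction.injective k).tendsto_cofinite.eventually
        (eventually_swap_apply_eq (.inl 1) (.inr 1))] with x hx hkx
    rw [hK k hk, hx, hkx]
  · rw [hK k hk, Equiv.swap_apply_left, Sum.smul_inr, smul_eq_mul, mul_one]
    exact Equiv.swap_apply_of_ne_of_ne (by simp) (by simpa using hk1)

theorem exists_isEndCut_of_isSeparableElt [IsMulTorsionFree G] {g : G} (hg : IsSeparableElt g) :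
    ∃ A : Set G, IsEndCut g A := by
  obtain ⟨F, ⟨K, hF, hK, hFK⟩, hgF⟩ := hg
  obtain ⟨r, hr, hrF, hrK⟩ := exists_twisted_translation hFK
  refine ⟨{v | r v (.inl 1) = .inl v}, fun s ↦ ?_, ?_, ?_, fun v ↦ ?_⟩
  · filter_upwards [Sum.inl_injective.tendsto_cofinite.eventually (hr s)] with v hv
    change r (s * v) (.inl 1) = s • .inl v ↔ r v (.inl 1) = .inl v
    rw [← hv, map_mul, Equiv.Perm.mul_apply, (r s).apply_eq_iff_eq]
  · exact (coe_infinite_of_ne_bot hF).mono fun f hf ↦ by simp [hrF f hf]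
  · refine ((coe_infinite_of_ne_bot hK).sdiff (Set.finite_singleton 1)).mono fun k hk ↦ ?_
    simp [hrK k hk.1 hk.2]
  · change r (g * v) (.inl 1) = g • .inl v ↔ r v (.inl 1) = .inl v
    rw [map_mul, Equiv.Perm.mul_apply, hrF g hgF, smul_left_cancel_iff]

end FreeFactor

section ReducedWord

open FreeGroup

variable {α : Type*}

theorem isReduced_invRev {L : List (α × Bool)} (h : IsReduced L) : IsReduced (invRev L) := by
  classical rw [isReduced_iff_reduce_eq] at *; rw [reduce_invRev, h]

theorem isCyclicallyReduced_iff_isReduced_append_self {L : List (α × Bool)} :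
    IsCyclicallyReduced L ↔ IsReduced (L ++ L) := by
  simp [IsCyclicallyReduced, FreeGroup.IsReduced, List.isChain_append]

theorem isCyclicallyReduced_invRev {L : List (α × Bool)} (h : IsCyclicallyReduced L) :
    IsCyclicallyReduced (invRev L) := by
  rw [isCyclicallyReduced_iff_isReduced_append_self] at *
  simpa using isReduced_invRev h

theorem isCyclicallyReduced_append_comm {L₁ L₂ : List (α × Bool)}
    (h : IsCyclicallyReduced (L₁ ++ L₂)) : IsCyclicallyReduced (L₂ ++ L₁) := by
  rw [isCyclicallyReduced_iff_isReduced_append_self]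
  refine (h.flatten_replicate 3).isReduced.infix ⟨L₁, L₂, ?_⟩
  simp [List.replicate_succ]

theorem isReduced_of_forall_snd_eq {L : List (α × Bool)} {s : Bool} (h : ∀ x ∈ L, x.2 = s) :
    IsReduced L := by
  have hpair : L.Pairwise fun a b ↦ a.1 = b.1 → a.2 = b.2 :=
    List.pairwise_of_forall_mem_list fun x hx y hy _ ↦ (h x hx).trans (h y hy).symm
  exact hpair.isChain

theorem exists_isReduced_cons_not {Y : List (α × Bool)} {i j : α} {s : Bool} (hij : i ≠ j)
    (hi : IsReduced ((i, s) :: Y)) : ∃ q, IsReduced ((q, !s) :: Y) := by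
  cases Y with
  | nil => exact ⟨i, by simp⟩
  | cons y Y =>
    have hY := (isReduced_cons_cons.1 hi).2
    obtain ⟨q, hq⟩ : ∃ q, q ≠ y.1 := by
      by_contra! h
      exact hij ((h i).trans (h j).symm)
    exact ⟨q, isReduced_cons_cons.2 ⟨fun h ↦ absurd h hq, hY⟩⟩

theorem mk_flatten_replicate (L : List (α × Bool)) (k : ℕ) :
    FreeGroup.mk (List.replicate k L).flatten = FreeGroup.mk L ^ k := by
  induction k with
  | zero => simp [FreeGroup.one_eq_mk]
  | succ k ih => rw [List.replicate_succ, List.flatten_cons, ← mul_mk, ih, pow_succ']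

theorem exists_isCyclicallyReduced_conj (g : FreeGroup α) :
    ∃ (c : FreeGroup α) (W : List (α × Bool)), IsCyclicallyReduced W ∧
      g = c * FreeGroup.mk W * c⁻¹ := by
  classical
  refine ⟨.mk (reduceCyclically.conjugator g.toWord), reduceCyclically g.toWord,
    reduceCyclically.isCyclicallyReduced isReduced_toWord, ?_⟩
  rw [inv_mk, mul_mk, mul_mk, reduceCyclically.conj_conjugator_reduceCyclically, mk_toWord]

variable [DecidableEq α]

theorem toWord_mk_of_isReduced {L : List (α × Bool)} (h : IsReduced L) :
    (FreeGroup.mk L).toWord = L := by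
  rw [toWord_mk, h.reduce_eq]

theorem suffix_toWord_pow_succ_mul {V Y : List (α × Bool)} {a : α × Bool}
    (hV : IsCyclicallyReduced V) (ha : [a] <:+ V) (hY : IsReduced (a :: Y)) (k : ℕ) :
    a :: Y <:+ (FreeGroup.mk V ^ (k + 1) * FreeGroup.mk Y).toWord := by
  obtain ⟨V₀, rfl⟩ := ha
  have hpow : IsReduced ((List.replicate k (V₀ ++ [a])).flatten ++ V₀ ++ [a]) := by
    simpa [List.replicate_succ'] using (hV.flatten_replicate (k + 1)).isReduced
  have hred := IsReduced.append_overlap hpow hY (List.cons_ne_nil a [])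
  refine ⟨(List.replicate k (V₀ ++ [a])).flatten ++ V₀, ?_⟩
  rw [← mk_flatten_replicate, mul_mk, List.replicate_succ', List.flatten_concat,
    ← List.append_assoc, toWord_mk_of_isReduced hred]
  simp

end ReducedWord

section Cone

open FreeGroup

variable {α : Type*} [DecidableEq α] {A : Set (FreeGroup α)} {Y : List (α × Bool)}

/-- All but finitely many elements whose reduced word ends in `Y` belong to `A`. The words ending
in `Y` form a subtree of the Cayley graph with edges `v — s * v`, empty when `Y` is not reduced. -/
def ConeAlmostSubset (A : Set (FreeGroup α)) (Y : List (α × Bool)) : Prop :=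
  ∀ᶠ v in cofinite, Y <:+ v.toWord → v ∈ A

theorem ConeAlmostSubset.congr {A' : Set (FreeGroup α)} (h : ConeAlmostSubset A Y)
    (hA : ∀ᶠ v in cofinite, (v ∈ A' ↔ v ∈ A)) : ConeAlmostSubset A' Y := by
  filter_upwards [h, hA] with v hv hvA hY using hvA.2 (hv hY)

theorem coneAlmostSubset_nil_iff : ConeAlmostSubset A [] ↔ Aᶜ.Finite := by
  simp [ConeAlmostSubset, eventually_cofinite, Set.compl_def]

theorem coneAlmostSubset_of_not_isReduced (h : ¬IsReduced Y) : ConeAlmostSubset A Y :=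
  .of_forall fun _ hY ↦ absurd (isReduced_toWord.infix hY.isInfix) h

theorem coneAlmostSubset_of_forall_cons [Finite α] (h : ∀ d, ConeAlmostSubset A (d :: Y)) :
    ConeAlmostSubset A Y := by
  filter_upwards [eventually_all.2 h, (Set.finite_singleton (FreeGroup.mk Y)).compl_mem_cofinite]
    with v hv hvY ⟨P, hP⟩
  obtain rfl | ⟨P, d, rfl⟩ := P.eq_nil_or_concat'
  · exact absurd (mk_toWord (x := v) ▸ congrArg FreeGroup.mk hP.symm) hvY
  · exact hv d ⟨P, by simpa using hP⟩

theorem exists_forall_le_norm_mul_mem_iff [Finite α]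
    (hA : ∀ s, ∀ᶠ v in cofinite, (s * v ∈ A ↔ v ∈ A)) :
    ∃ M, ∀ v : FreeGroup α, M ≤ v.norm → ∀ x, FreeGroup.mk [x] * v ∈ A ↔ v ∈ A := by
  have hfin : {v | ¬∀ x, FreeGroup.mk [x] * v ∈ A ↔ v ∈ A}.Finite :=
    eventually_cofinite.1 (eventually_all.2 fun x ↦ hA (.mk [x]))
  obtain ⟨M, hM⟩ := (hfin.image FreeGroup.norm).bddAbove
  refine ⟨M + 1, fun v hv ↦ ?_⟩
  by_contra hx
  exact absurd (hM ⟨v, hx, rfl⟩) (by omega)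

theorem mem_iff_mk_mem_of_suffix_toWord {M : ℕ}
    (hM : ∀ v : FreeGroup α, M ≤ v.norm → ∀ x, FreeGroup.mk [x] * v ∈ A ↔ v ∈ A)
    (hY : M ≤ Y.length) {v : FreeGroup α} (hv : Y <:+ v.toWord) : v ∈ A ↔ FreeGroup.mk Y ∈ A := by
  obtain ⟨P, hP⟩ := hv
  induction P generalizing v with
  | nil => rw [← mk_toWord (x := v), ← hP, List.nil_append]
  | cons x P ih =>
    have hred : IsReduced (x :: (P ++ Y)) := by
      rw [← List.cons_append, hP]
      exact isReduced_toWord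
    have hPY := toWord_mk_of_isReduced (hred.infix (List.suffix_cons x _).isInfix)
    have hnorm : M ≤ (FreeGroup.mk (P ++ Y)).norm := by
      rw [FreeGroup.norm, hPY, List.length_append]
      omega
    rw [← mk_toWord (x := v), ← hP, ← ih hPY.symm, ← hM _ hnorm x, mul_mk]
    rfl

theorem exists_forall_le_length_coneAlmostSubset_or_compl [Finite α]
    (hA : ∀ s, ∀ᶠ v in cofinite, (s * v ∈ A ↔ v ∈ A)) :
    ∃ M, ∀ Y : List (α × Bool), M ≤ Y.length →
      ConeAlmostSubset A Y ∨ ConeAlmostSubset Aᶜ Y := by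
  obtain ⟨M, hM⟩ := exists_forall_le_norm_mul_mem_iff hA
  refine ⟨M, fun Y hY ↦ ?_⟩
  by_cases hYA : FreeGroup.mk Y ∈ A
  · exact .inl (.of_forall fun v hv ↦ (mem_iff_mk_mem_of_suffix_toWord hM hY hv).2 hYA)
  · exact .inr (.of_forall fun v hv ↦ mt (mem_iff_mk_mem_of_suffix_toWord hM hY hv).1 hYA)

theorem exists_cut_vertex [Finite α] (hA : ∀ s, ∀ᶠ v in cofinite, (s * v ∈ A ↔ v ∈ A))
    (hinf : A.Infinite) (hinf_compl : Aᶜ.Infinite) :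
    ∃ Y : List (α × Bool), ¬ConeAlmostSubset A Y ∧ ¬ConeAlmostSubset Aᶜ Y ∧
      ∀ d, ConeAlmostSubset A (d :: Y) ∨ ConeAlmostSubset Aᶜ (d :: Y) := by
  by_contra! hno
  obtain ⟨M, hM⟩ := exists_forall_le_length_coneAlmostSubset_or_compl hA
  have hall (k : ℕ) : ∀ Y : List (α × Bool), M ≤ Y.length + k →
      ConeAlmostSubset A Y ∨ ConeAlmostSubset Aᶜ Y := by
    induction k with
    | zero => exact hM
    | succ k ih =>
      intro Y hY
      by_contra! hY'
      obtain ⟨d, hd, hd'⟩ := hno Y hY'.1 hY'.2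
      exact (ih (d :: Y) (by simp; omega)).elim hd hd'
  rcases hall M [] (by simp) with h | h
  · exact hinf_compl (coneAlmostSubset_nil_iff.1 h)
  · exact hinf (by simpa using coneAlmostSubset_nil_iff.1 h)

theorem mk_mem_of_coneAlmostSubset_cons {V : List (α × Bool)} {a : α × Bool}
    (hV : IsCyclicallyReduced V) (ha : [a] <:+ V) (hY : IsReduced (a :: Y))
    (hA : IsEndCut (FreeGroup.mk V) A) (h : ConeAlmostSubset A (a :: Y)) :
    FreeGroup.mk Y ∈ A := by
  have hne : FreeGroup.mk V ≠ 1 := by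
    rw [Ne, ← toWord_eq_nil_iff, toWord_mk_of_isReduced hV.isReduced]
    rintro rfl
    simp at ha
  have hinj : Function.Injective fun k : ℕ ↦ FreeGroup.mk V ^ (k + 1) * FreeGroup.mk Y :=
    (mul_left_injective _).comp
      ((IsMulTorsionFree.pow_right_injective hne).comp (add_left_injective 1))
  obtain ⟨k, hk⟩ := (hinj.tendsto_cofinite.eventually h).exists
  exact (hA.pow_mul_mem_iff _ _).1 (hk (suffix_toWord_pow_succ_mul hV ha hY k))

theorem not_coneAlmostSubset_compl_of_cyclic {V : List (α × Bool)} {a b : α × Bool}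
    (hV : IsCyclicallyReduced V) (ha : [a] <:+ V) (hb : [b] <+: V)
    (hA : IsEndCut (FreeGroup.mk V) A) (haY : IsReduced (a :: Y))
    (hbY : IsReduced ((b.1, !b.2) :: Y))
    (h : ConeAlmostSubset A (a :: Y)) : ¬ConeAlmostSubset Aᶜ ((b.1, !b.2) :: Y) := by
  intro h'
  have hb' : [(b.1, !b.2)] <:+ invRev V := by
    obtain ⟨t, rfl⟩ := hb
    exact ⟨invRev t, by simp [invRev]⟩
  exact mk_mem_of_coneAlmostSubset_cons (isCyclicallyReduced_invRev hV) hb' hbY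
    (by simpa using hA.inv.compl) h' (mk_mem_of_coneAlmostSubset_cons hV ha haY hA h)

theorem not_coneAlmostSubset_compl_of_infix {W : List (α × Bool)} {a b : α × Bool}
    (hW : IsCyclicallyReduced W) (hab : [a, b] <:+: W) (hA : IsEndCut (FreeGroup.mk W) A)
    (haY : IsReduced (a :: Y)) (hbY : IsReduced ((b.1, !b.2) :: Y))
    (h : ConeAlmostSubset A (a :: Y)) : ¬ConeAlmostSubset Aᶜ ((b.1, !b.2) :: Y) := by
  obtain ⟨L, R, rfl⟩ := hab
  set p := FreeGroup.mk (L ++ [a])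
  have hV : IsCyclicallyReduced (b :: R ++ (L ++ [a])) :=
    isCyclicallyReduced_append_comm (by simpa using hW)
  have hconj : p⁻¹ * FreeGroup.mk (L ++ [a, b] ++ R) * p = .mk (b :: R ++ (L ++ [a])) := by
    rw [show L ++ [a, b] ++ R = L ++ [a] ++ (b :: R) by simp, ← mul_mk, ← mul_mk (L₁ := b :: R),
      inv_mul_cancel_left]
  have hcut := hconj ▸ hA.conj p
  have hAp := hA.eventually_mul_mem_iff p
  exact fun h' ↦ not_coneAlmostSubset_compl_of_cyclic hV ⟨b :: R ++ L, by simp⟩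
    ⟨R ++ (L ++ [a]), by simp⟩ hcut haY hbY (h.congr hAp) (h'.congr (hAp.mono fun _ ↦ not_congr))

end Cone

section CutVertex

open FreeGroup

theorem not_isEndCut_of_forall_infix {α : Type*} [Finite α] {A : Set (FreeGroup α)}
    {W : List (α × Bool)} (hW : IsCyclicallyReduced W)
    (hfull : ∀ i j : α, [(i, true), (j, true)] <:+: W) : ¬IsEndCut (FreeGroup.mk W) A := by
  classical
  intro hA
  obtain ⟨Y, hYA, hYA', hdec⟩ :=
    exists_cut_vertex hA.eventually_mul_mem_iff hA.infinite hA.infinite_compl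
  have hlink {i j : α} {s : Bool} (hi : IsReduced ((i, s) :: Y)) (hj : IsReduced ((j, !s) :: Y))
      (h : ConeAlmostSubset A ((i, s) :: Y)) : ¬ConeAlmostSubset Aᶜ ((j, !s) :: Y) := by
    cases s with
    | true => exact not_coneAlmostSubset_compl_of_infix hW (hfull i j) hA hi hj h
    | false =>
      intro h'
      exact not_coneAlmostSubset_compl_of_infix hW (hfull j i) hA.compl hj hi h' (by simpa using h)
  obtain ⟨c', hc'⟩ := not_forall.1 (mt coneAlmostSubset_of_forall_cons hYA)
  obtain ⟨c, hc⟩ := not_forall.1 (mt coneAlmostSubset_of_forall_cons hYA')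
  have hcred : IsReduced (c :: Y) := not_not.1 (mt coneAlmostSubset_of_not_isReduced hc)
  have hcred' : IsReduced (c' :: Y) := not_not.1 (mt coneAlmostSubset_of_not_isReduced hc')
  have hcA := (hdec c).resolve_right hc
  have hcA' := (hdec c').resolve_left hc'
  obtain ⟨i, s⟩ := c
  obtain ⟨j, t⟩ := c'
  obtain rfl | rfl := Bool.eq_or_eq_not t s
  -- Branches of equal sign are not linked directly, only through one of the opposite sign.
  · have hij : i ≠ j := by rintro rfl; exact hc' hcA
    obtain ⟨q, hq⟩ := exists_isReduced_cons_not hij hcred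
    have hqA := (hdec _).resolve_right (hlink hcred hq hcA)
    exact hlink hq (by simpa using hcred') hqA (by simpa using hcA')
  · exact hlink hcred hcred' hcA hcA'

end CutVertex

section Quasimorphism

variable {G R : Type*} [Group G] [AddCommGroup R] [LinearOrder R]

/-- A quasimorphism `f` of defect at most `D` that is odd, i.e. `f g⁻¹ = -f g`. -/
structure IsOddQuasimorphism (f : G → R) (D : R) : Prop where
  abs_map_mul_sub_sub_le : ∀ g h, |f (g * h) - f g - f h| ≤ D
  map_inv : ∀ g, f g⁻¹ = -f g

namespace IsOddQuasimorphism

variable [IsOrderedAddMonoid R] {f : G → R} {C D : R}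

theorem map_one (hf : IsOddQuasimorphism f D) : f 1 = 0 :=
  self_eq_neg.1 (by simpa using hf.map_inv 1)

theorem abs_map_mul_le (hf : IsOddQuasimorphism f D) (g h : G) :
    |f (g * h)| ≤ |f g| + |f h| + D :=
  calc |f (g * h)| = |f g + f h + (f (g * h) - f g - f h)| := by congr 1; abel
    _ ≤ |f g| + |f h| + |f (g * h) - f g - f h| := abs_add_three _ _ _
    _ ≤ |f g| + |f h| + D := by gcongr; exact hf.abs_map_mul_sub_sub_le g h

theorem abs_map_conj_le (hf : IsOddQuasimorphism f D) (c g : G) :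
    |f (c * g * c⁻¹)| ≤ |f g| + D + D :=
  calc |f (c * g * c⁻¹)|
      = |f g + (f (c * g) - f c - f g) + (f (c * g * c⁻¹) - f (c * g) - f c⁻¹)| := by
        rw [hf.map_inv]; congr 1; abel
    _ ≤ |f g| + |f (c * g) - f c - f g| + |f (c * g * c⁻¹) - f (c * g) - f c⁻¹| :=
        abs_add_three _ _ _
    _ ≤ |f g| + D + D := by gcongr <;> exact hf.abs_map_mul_sub_sub_le _ _

theorem abs_map_list_prod_le (hf : IsOddQuasimorphism f D) {l : List G}
    (hl : ∀ a ∈ l, |f a| ≤ C) : |f l.prod| ≤ l.length • (C + D) := by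
  induction l with
  | nil => simp [hf.map_one]
  | cons a l ih =>
    rw [List.forall_mem_cons] at hl
    calc |f (a :: l).prod| ≤ |f a| + |f l.prod| + D := by
          simpa using hf.abs_map_mul_le a l.prod
      _ ≤ C + l.length • (C + D) + D := by gcongr; exacts [hl.1, ih hl.2]
      _ = (a :: l).length • (C + D) := by rw [List.length_cons, succ_nsmul]; abel

end IsOddQuasimorphism

end Quasimorphism

section InfixCount

variable {X : Type*} [DecidableEq X] {u : List X}

/-- The number of positions at which `u` occurs as a block of consecutive letters of `L`;
occurrences may overlap. -/
def infixCount (u L : List X) : ℕ :=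
  L.tails.countP (u <+: ·)

theorem infixCount_nil (hu : u ≠ []) : infixCount u [] = 0 := by
  simp [infixCount, hu]

theorem infixCount_cons (u : List X) (x : X) (L : List X) :
    infixCount u (x :: L) = infixCount u L + if u <+: x :: L then 1 else 0 := by
  simp [infixCount, List.countP_cons]

theorem infixCount_pos_iff {L : List X} : 0 < infixCount u L ↔ u <:+: L := by
  simp [infixCount, List.countP_pos_iff, List.infix_iff_prefix_suffix, and_comm]

theorem infixCount_add_le_append (hu : u ≠ []) (p q : List X) :
    infixCount u p + infixCount u q ≤ infixCount u (p ++ q) := by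
  induction p with
  | nil => simp [infixCount_nil hu]
  | cons x p ih =>
    have hmono : u <+: x :: p → u <+: x :: (p ++ q) := fun h ↦ h.trans ⟨q, rfl⟩
    rw [List.cons_append, infixCount_cons, infixCount_cons]
    split_ifs <;> first | omega | tauto

theorem infixCount_append_le (u p q : List X) :
    infixCount u (p ++ q) ≤ infixCount u p + infixCount u q + min p.length u.length := by
  induction p with
  | nil => simp
  | cons x p ih =>
    have hshort : u <+: x :: (p ++ q) → u.length ≤ p.length + 1 → u <+: x :: p :=
      fun h hl ↦ List.prefix_of_prefix_length_le h (List.prefix_append (x :: p) q) hl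
    rw [List.cons_append, infixCount_cons, infixCount_cons, List.length_cons]
    split_ifs with h h' <;> grind

theorem le_infixCount_flatten_replicate (hu : u ≠ []) (k : ℕ) :
    k ≤ infixCount u (List.replicate k u).flatten := by
  induction k with
  | zero => simp
  | succ k ih =>
    have hself : 0 < infixCount u u := infixCount_pos_iff.2 List.infix_rfl
    have := infixCount_add_le_append hu u (List.replicate k u).flatten
    rw [List.replicate_succ, List.flatten_cons]
    omega

end InfixCount

section CountingQuasimorphism

open FreeGroup

theorem exists_common_prefix {X : Type*} (L₁ L₂ : List X) :
    ∃ r p q, L₁ = r ++ p ∧ L₂ = r ++ q ∧ ∀ x ∈ p.head?, ∀ y ∈ q.head?, x ≠ y := by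
  induction L₁ generalizing L₂ with
  | nil => exact ⟨[], [], L₂, by simp⟩
  | cons a L₁ ih =>
    rcases L₂ with _ | ⟨b, L₂⟩
    · exact ⟨[], a :: L₁, [], by simp⟩
    by_cases hab : a = b
    · obtain ⟨r, p, q, hp, hq, hne⟩ := ih L₂
      exact ⟨a :: r, p, q, by simp [hp], by simp [hab, hq], hne⟩
    · exact ⟨[], a :: L₁, b :: L₂, by simpa using hab⟩

variable {α : Type*} [DecidableEq α] {u : List (α × Bool)}

theorem exists_toWord_mul_eq_append (g h : FreeGroup α) : ∃ p q r,
    g.toWord = p ++ r ∧ h.toWord = invRev r ++ q ∧ (g * h).toWord = p ++ q := by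
  obtain ⟨r, p, q, hg, hh, hne⟩ := exists_common_prefix g⁻¹.toWord h.toWord
  have hg' : g.toWord = invRev p ++ invRev r := by
    rw [← inv_inv g, toWord_inv, hg, invRev_append]
  have hred : IsReduced (invRev p ++ q) := by
    have hp : IsReduced (invRev p) :=
      (isReduced_toWord (x := g)).infix ⟨[], invRev r, hg'.symm⟩
    have hq : IsReduced q := (isReduced_toWord (x := h)).infix ⟨r, [], by simp [hh]⟩
    refine List.isChain_append.2 ⟨hp, hq, fun x hx y hy hxy ↦ ?_⟩
    cases p with
    | nil => simp at hx
    | cons z p =>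
      obtain rfl : x = (z.1, !z.2) := by simpa [invRev, eq_comm] using hx
      have hzy := hne z (by simp) y hy
      simpa [Prod.ext_iff, show z.1 = y.1 from hxy, Bool.eq_not] using hzy
  refine ⟨invRev p, q, invRev r, hg', by rw [invRev_invRev, hh], ?_⟩
  rw [← mk_toWord (x := g), ← mk_toWord (x := h), hg', hh, ← toWord_mk_of_isReduced hred]
  congr 1
  simp only [← mul_mk, ← inv_mk]
  group

/-- Brooks' counting quasimorphism of the word `u`. The occurrences of `u⁻¹` in `g` are counted as
occurrences of `u` in `g⁻¹`. -/
def brooksCount (u : List (α × Bool)) (g : FreeGroup α) : ℤ :=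
  infixCount u g.toWord - infixCount u g⁻¹.toWord

theorem isOddQuasimorphism_brooksCount (hu : u ≠ []) :
    IsOddQuasimorphism (brooksCount u) (3 * u.length) where
  map_inv g := by simp [brooksCount]
  abs_map_mul_sub_sub_le g h := by
    obtain ⟨p, q, r, hg, hh, hgh⟩ := exists_toWord_mul_eq_append g h
    simp only [brooksCount, toWord_inv, hg, hh, hgh, invRev_append, invRev_invRev]
    have hbound (a b : List (α × Bool)) :
        infixCount u a + infixCount u b ≤ infixCount u (a ++ b) ∧
          infixCount u (a ++ b) ≤ infixCount u a + infixCount u b + u.length :=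
      ⟨infixCount_add_le_append hu a b, (infixCount_append_le u a b).trans (by omega)⟩
    have hcount_g := hbound p r
    have hcount_g_inv := hbound (invRev r) (invRev p)
    have hcount_h := hbound (invRev r) q
    have hcount_h_inv := hbound (invRev q) r
    have hcount_gh := hbound p q
    have hcount_gh_inv := hbound (invRev q) (invRev p)
    rw [abs_le]
    omega

theorem abs_brooksCount_le_of_isSeparableElt [Finite α] (hu : u ≠ [])
    (hfull : ∀ i j : α, [(i, true), (j, true)] <:+: u) {g : FreeGroup α} (hg : IsSeparableElt g) :
    |brooksCount u g| ≤ 6 * u.length := by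
  obtain ⟨A, hA⟩ := exists_isEndCut_of_isSeparableElt hg
  obtain ⟨c, W, hW, rfl⟩ := exists_isCyclicallyReduced_conj g
  have hcut : IsEndCut (.mk W) ((c * ·) ⁻¹' A) := by simpa [mul_assoc] using hA.conj c
  have hzero {V : List (α × Bool)} {A : Set (FreeGroup α)} (hV : IsCyclicallyReduced V)
      (hA : IsEndCut (.mk V) A) : infixCount u V = 0 :=
    Nat.eq_zero_of_not_pos fun hpos ↦ not_isEndCut_of_forall_infix hV
      (fun i j ↦ (hfull i j).trans (infixCount_pos_iff.1 hpos)) hA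
  have hW0 : brooksCount u (.mk W) = 0 := by
    rw [brooksCount, toWord_inv, toWord_mk_of_isReduced hW.isReduced, hzero hW hcut,
      hzero (isCyclicallyReduced_invRev hW) (by simpa using hcut.inv), sub_self]
  calc |brooksCount u (c * .mk W * c⁻¹)|
      ≤ |brooksCount u (.mk W)| + 3 * u.length + 3 * u.length :=
        (isOddQuasimorphism_brooksCount hu).abs_map_conj_le c (.mk W)
    _ = 6 * u.length := by rw [hW0, abs_zero]; ring

theorem le_brooksCount_pow (hu : u ≠ []) (hpos : ∀ x ∈ u, x.2 = true) (k : ℕ) :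
    k ≤ brooksCount u (FreeGroup.mk u ^ k) := by
  have hpos' : ∀ x ∈ (List.replicate k u).flatten, x.2 = true := fun x hx ↦ by
    obtain ⟨L, hL, hxL⟩ := List.mem_flatten.1 hx
    exact hpos x (List.eq_of_mem_replicate hL ▸ hxL)
  have hinv : infixCount u (invRev (List.replicate k u).flatten) = 0 := by
    refine Nat.eq_zero_of_not_pos fun h ↦ ?_
    obtain ⟨x, hx⟩ := List.exists_mem_of_ne_nil u hu
    have hmem : x ∈ invRev _ := (infixCount_pos_iff.1 h).subset hx
    simp only [invRev, List.mem_reverse, List.mem_map] at hmem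
    obtain ⟨y, hy, rfl⟩ := hmem
    simpa [hpos' y hy] using hpos _ hx
  rw [brooksCount, toWord_inv, ← mk_flatten_replicate,
    toWord_mk_of_isReduced (isReduced_of_forall_snd_eq hpos'), hinv]
  simpa using le_infixCount_flatten_replicate hu k

end CountingQuasimorphism

theorem exists_forall_snd_eq_true_forall_infix (α : Type*) [Finite α] :
    ∃ u : List (α × Bool), (∀ x ∈ u, x.2 = true) ∧ ∀ i j, [(i, true), (j, true)] <:+: u := by
  have := Fintype.ofFinite (α × α)
  refine ⟨(Finset.univ.toList.map fun p : α × α ↦ [(p.1, true), (p.2, true)]).flatten, ?_,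
    fun i j ↦ List.infix_of_mem_flatten (List.mem_map.2 ⟨(i, j), by simp, rfl⟩)⟩
  simp +contextual [or_imp]

theorem no_uniform_separable_bound_general {α : Type*} [Finite α] [Nonempty α] (B : ℕ) :
    ∃ w : FreeGroup α, ∀ l : List (FreeGroup α),
      (∀ a ∈ l, IsSeparableElt a) → l.prod = w → B < l.length := by
  classical
  obtain ⟨u, hpos, hfull⟩ := exists_forall_snd_eq_true_forall_infix α
  obtain ⟨i⟩ := ‹Nonempty α›
  have hu : u ≠ [] := by
    rintro rfl
    simpa using hfull i i
  refine ⟨.mk u ^ (B * (9 * u.length) + 1), fun l hsep hprod ↦ ?_⟩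
  by_contra! hl
  have hle := (isOddQuasimorphism_brooksCount hu).abs_map_list_prod_le
    fun a ha ↦ abs_brooksCount_le_of_isSeparableElt hu hfull (hsep a ha)
  have hge := (le_brooksCount_pow hu hpos (B * (9 * u.length) + 1)).trans (le_abs_self _)
  rw [hprod] at hle
  have hlB : (l.length : ℤ) * (9 * u.length) ≤ B * (9 * u.length) := by gcongr
  rw [nsmul_eq_mul] at hle
  push_cast at hge
  linarith

/-- For `n ≥ 2`, there is no uniform bound on the number of separable factors
needed to express elements of `F_n`. -/
theorem no_uniform_separable_bound (n : ℕ) (hn : 2 ≤ n) (B : ℕ) :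
    ∃ w : FreeGroup (Fin n),
      ¬∃ l : List (FreeGroup (Fin n)),
        l.length ≤ B ∧ (∀ a ∈ l, IsSeparableElt a ∧ a ≠ 1) ∧ l.prod = w := by
  have : NeZero n := ⟨by omega⟩
  obtain ⟨w, hw⟩ := no_uniform_separable_bound_general (α := Fin n) B
  exact ⟨w, fun ⟨l, hl, hsep, hprod⟩ ↦ (hw l (fun a ha ↦ (hsep a ha).1) hprod).not_ge hl⟩
end
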